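/- Fundamental lemma of the effect logical relation: (1) if Γ ⊢ V : A then Γ ⊨ V : A; (2) if Γ ⊢ M :^φ B then Γ ⊨ M :^φ B. -/

import Mathlib

set_option autoImplicit false

/-- A preordered monoid of effects `(E, ·, ⊥, ≤eff)`, with a distinguished `tock` effect. -/
structure EffSig (E : Type) where
  op : E → E → E
  bot : E
  tock : E
  le : E → E → Prop
  op_assoc : ∀ a b c, op (op a b) c = op a (op b c)
  bot_op : ∀ a, op bot a = a
  op_bot : ∀ a, op a bot = a
  le_refl : ∀ a, le a a
  le_trans : ∀ a b c, le a b → le b c → le a c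
  le_op : ∀ a b c d, le a b → le c d → le (op a c) (op b d)

namespace CBPVEff

mutual
/-- CBPV value types: `unit`, graded thunks `U_φ B`, positive products. -/
inductive VTy (E : Type) : Type where
  | unit : VTy E
  | thunk : E → CTy E → VTy E
  | prod : VTy E → VTy E → VTy E
/-- CBPV computation types: functions, returners `F A`, negative products. -/
inductive CTy (E : Type) : Type where
  | arr : VTy E → CTy E → CTy E
  | F : VTy E → CTy E
  | wth : CTy E → CTy E → CTy E
end

mutual
/-- CBPV values (de Bruijn indices for variables). -/
inductive Val : Type where
  | var : Nat → Val
  | unit : Val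
  | thunk : Comp → Val
  | pair : Val → Val → Val
/-- CBPV computations. -/
inductive Comp : Type where
  | lam : Comp → Comp
  | app : Comp → Val → Comp
  | force : Val → Comp
  | split : Val → Comp → Comp
  | cpair : Comp → Comp → Comp
  | fst : Comp → Comp
  | snd : Comp → Comp
  | ret : Val → Comp
  | letin : Comp → Comp → Comp
  | tick : Comp
end

mutual
/-- The value typing judgment `Γ ⊢ V : A` of the CBPV type-and-effect system. -/
inductive VHasTy {E : Type} (S : EffSig E) : List (VTy E) → Val → VTy E → Prop where
  | var : ∀ {Γ : List (VTy E)} {x : Nat} {A : VTy E},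
      Γ[x]? = some A → VHasTy S Γ (.var x) A
  | unit : ∀ {Γ : List (VTy E)}, VHasTy S Γ .unit .unit
  | thunk : ∀ {Γ : List (VTy E)} {M : Comp} {φ : E} {B : CTy E},
      CHasTy S Γ M φ B → VHasTy S Γ (.thunk M) (.thunk φ B)
  | pair : ∀ {Γ : List (VTy E)} {V₁ V₂ : Val} {A₁ A₂ : VTy E},
      VHasTy S Γ V₁ A₁ → VHasTy S Γ V₂ A₂ → VHasTy S Γ (.pair V₁ V₂) (.prod A₁ A₂)

/-- The computation typing judgment `Γ ⊢ M :^φ B` of the CBPV type-and-effect system. -/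
inductive CHasTy {E : Type} (S : EffSig E) : List (VTy E) → Comp → E → CTy E → Prop where
  | tick : ∀ {Γ : List (VTy E)} {φ : E}, S.le S.tock φ → CHasTy S Γ .tick φ (.F .unit)
  | lam : ∀ {Γ : List (VTy E)} {A : VTy E} {M : Comp} {φ : E} {B : CTy E},
      CHasTy S (A :: Γ) M φ B → CHasTy S Γ (.lam M) φ (.arr A B)
  | app : ∀ {Γ : List (VTy E)} {M : Comp} {V : Val} {A : VTy E} {φ : E} {B : CTy E},
      CHasTy S Γ M φ (.arr A B) → VHasTy S Γ V A → CHasTy S Γ (.app M V) φ B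
  | force : ∀ {Γ : List (VTy E)} {V : Val} {φ' φ : E} {B : CTy E},
      VHasTy S Γ V (.thunk φ' B) → S.le φ' φ → CHasTy S Γ (.force V) φ B
  | ret : ∀ {Γ : List (VTy E)} {V : Val} {A : VTy E} {φ : E},
      VHasTy S Γ V A → S.le S.bot φ → CHasTy S Γ (.ret V) φ (.F A)
  | letin : ∀ {Γ : List (VTy E)} {M N : Comp} {A : VTy E} {φ₁ φ₂ φ : E} {B : CTy E},
      CHasTy S Γ M φ₁ (.F A) → CHasTy S (A :: Γ) N φ₂ B →
      S.le (S.op φ₁ φ₂) φ → CHasTy S Γ (.letin M N) φ B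
  | split : ∀ {Γ : List (VTy E)} {V : Val} {A₁ A₂ : VTy E} {N : Comp} {φ : E} {B : CTy E},
      VHasTy S Γ V (.prod A₁ A₂) → CHasTy S (A₂ :: A₁ :: Γ) N φ B →
      CHasTy S Γ (.split V N) φ B
  | cpair : ∀ {Γ : List (VTy E)} {M₁ M₂ : Comp} {φ : E} {B₁ B₂ : CTy E},
      CHasTy S Γ M₁ φ B₁ → CHasTy S Γ M₂ φ B₂ → CHasTy S Γ (.cpair M₁ M₂) φ (.wth B₁ B₂)
  | fst : ∀ {Γ : List (VTy E)} {M : Comp} {φ : E} {B₁ B₂ : CTy E},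
      CHasTy S Γ M φ (.wth B₁ B₂) → CHasTy S Γ (.fst M) φ B₁
  | snd : ∀ {Γ : List (VTy E)} {M : Comp} {φ : E} {B₁ B₂ : CTy E},
      CHasTy S Γ M φ (.wth B₁ B₂) → CHasTy S Γ (.snd M) φ B₂
end

/-- Closed values: closures of thunks, unit, and pairs of closed values. -/
inductive CloVal : Type where
  | clo : List CloVal → Comp → CloVal
  | unit : CloVal
  | pair : CloVal → CloVal → CloVal

/-- Closed terminal computations. -/
inductive Terminal : Type where
  | ret : CloVal → Terminal
  | lamClo : List CloVal → Comp → Terminal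
  | cpairClo : List CloVal → Comp → Comp → Terminal

/-- The value judgment `ρ ⊢ V ⇓ W`: closing a value under an environment. -/
inductive EvalVal : List CloVal → Val → CloVal → Prop where
  | var : ∀ {ρ : List CloVal} {x : Nat} {W : CloVal},
      ρ[x]? = some W → EvalVal ρ (.var x) W
  | unit : ∀ {ρ : List CloVal}, EvalVal ρ .unit .unit
  | thunk : ∀ {ρ : List CloVal} {M : Comp}, EvalVal ρ (.thunk M) (.clo ρ M)
  | pair : ∀ {ρ : List CloVal} {V₁ V₂ : Val} {W₁ W₂ : CloVal},
      EvalVal ρ V₁ W₁ → EvalVal ρ V₂ W₂ → EvalVal ρ (.pair V₁ V₂) (.pair W₁ W₂)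

/-- The effect-instrumented big-step judgment `ρ ⊢ M ⇓ T # φ`. -/
inductive EvalComp {E : Type} (S : EffSig E) : List CloVal → Comp → Terminal → E → Prop where
  | tick : ∀ {ρ : List CloVal}, EvalComp S ρ .tick (.ret .unit) S.tock
  | ret : ∀ {ρ : List CloVal} {V : Val} {W : CloVal},
      EvalVal ρ V W → EvalComp S ρ (.ret V) (.ret W) S.bot
  | lam : ∀ {ρ : List CloVal} {M : Comp}, EvalComp S ρ (.lam M) (.lamClo ρ M) S.bot
  | cpair : ∀ {ρ : List CloVal} {M₁ M₂ : Comp},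
      EvalComp S ρ (.cpair M₁ M₂) (.cpairClo ρ M₁ M₂) S.bot
  | app : ∀ {ρ ρ' : List CloVal} {M M' : Comp} {V : Val} {W : CloVal} {T : Terminal} {φ₁ φ₂ : E},
      EvalComp S ρ M (.lamClo ρ' M') φ₁ → EvalVal ρ V W →
      EvalComp S (W :: ρ') M' T φ₂ → EvalComp S ρ (.app M V) T (S.op φ₁ φ₂)
  | force : ∀ {ρ ρ' : List CloVal} {V : Val} {M : Comp} {T : Terminal} {φ : E},
      EvalVal ρ V (.clo ρ' M) → EvalComp S ρ' M T φ → EvalComp S ρ (.force V) T φ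
  | letin : ∀ {ρ : List CloVal} {M N : Comp} {W : CloVal} {T : Terminal} {φ₁ φ₂ : E},
      EvalComp S ρ M (.ret W) φ₁ → EvalComp S (W :: ρ) N T φ₂ →
      EvalComp S ρ (.letin M N) T (S.op φ₁ φ₂)
  | split : ∀ {ρ : List CloVal} {V : Val} {W₁ W₂ : CloVal} {N : Comp} {T : Terminal} {φ : E},
      EvalVal ρ V (.pair W₁ W₂) → EvalComp S (W₂ :: W₁ :: ρ) N T φ →
      EvalComp S ρ (.split V N) T φ
  | fst : ∀ {ρ ρ' : List CloVal} {M M₁ M₂ : Comp} {T : Terminal} {φ₁ φ₂ : E},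
      EvalComp S ρ M (.cpairClo ρ' M₁ M₂) φ₁ → EvalComp S ρ' M₁ T φ₂ →
      EvalComp S ρ (.fst M) T (S.op φ₁ φ₂)
  | snd : ∀ {ρ ρ' : List CloVal} {M M₁ M₂ : Comp} {T : Terminal} {φ₁ φ₂ : E},
      EvalComp S ρ M (.cpairClo ρ' M₁ M₂) φ₁ → EvalComp S ρ' M₂ T φ₂ →
      EvalComp S ρ (.snd M) T (S.op φ₁ φ₂)

mutual
/-- The logical relation on closed values: `W ∈ 𝒲⟦A⟧`. -/
def WRel {E : Type} (S : EffSig E) : VTy E → CloVal → Prop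
  | .unit, W => W = CloVal.unit
  | .thunk φ B, W => ∃ (ρ : List CloVal) (M : Comp), W = CloVal.clo ρ M ∧
      ∃ (T : Terminal) (φ₁ φ₂ : E), EvalComp S ρ M T φ₁ ∧ TRel S B T φ₂ ∧
        S.le (S.op φ₁ φ₂) φ
  | .prod A₁ A₂, W => ∃ (W₁ W₂ : CloVal), W = CloVal.pair W₁ W₂ ∧
      WRel S A₁ W₁ ∧ WRel S A₂ W₂

/-- The logical relation on closed terminals paired with effects: `(T, φ) ∈ 𝒯⟦B⟧`. -/
def TRel {E : Type} (S : EffSig E) : CTy E → Terminal → E → Prop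
  | .F A, T, φ => ∃ (W : CloVal), T = Terminal.ret W ∧ WRel S A W ∧ S.le S.bot φ
  | .arr A B, T, φ => ∃ (ρ : List CloVal) (M : Comp), T = Terminal.lamClo ρ M ∧
      ∀ (W : CloVal), WRel S A W →
        ∃ (T' : Terminal) (φ₁ φ₂ : E), EvalComp S (W :: ρ) M T' φ₁ ∧ TRel S B T' φ₂ ∧
          S.le (S.op φ₁ φ₂) φ
  | .wth B₁ B₂, T, φ => ∃ (ρ : List CloVal) (M₁ M₂ : Comp), T = Terminal.cpairClo ρ M₁ M₂ ∧
      (∃ (T' : Terminal) (φ₁ φ₂ : E), EvalComp S ρ M₁ T' φ₁ ∧ TRel S B₁ T' φ₂ ∧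
        S.le (S.op φ₁ φ₂) φ) ∧
      (∃ (T' : Terminal) (φ₁ φ₂ : E), EvalComp S ρ M₂ T' φ₁ ∧ TRel S B₂ T' φ₂ ∧
        S.le (S.op φ₁ φ₂) φ)
end

/-- The logical relation on computations with environments and effects: `(ρ, M, φ) ∈ ℳ⟦B⟧`. -/
def MRel {E : Type} (S : EffSig E) (B : CTy E) (ρ : List CloVal) (M : Comp) (φ : E) : Prop :=
  ∃ (T : Terminal) (φ₁ φ₂ : E), EvalComp S ρ M T φ₁ ∧ TRel S B T φ₂ ∧ S.le (S.op φ₁ φ₂) φ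

/-- The logical relation on values with environments: `(ρ, V) ∈ 𝒱⟦A⟧`. -/
def VRel {E : Type} (S : EffSig E) (A : VTy E) (ρ : List CloVal) (V : Val) : Prop :=
  ∃ (W : CloVal), EvalVal ρ V W ∧ WRel S A W

/-- Semantic typing of environments: `Γ ⊨ ρ`. -/
def EnvOk {E : Type} (S : EffSig E) (Γ : List (VTy E)) (ρ : List CloVal) : Prop :=
  ∀ (x : Nat) (A : VTy E), Γ[x]? = some A → ∃ (W : CloVal), ρ[x]? = some W ∧ WRel S A W

/-- Semantic typing of values: `Γ ⊨ V : A`. -/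
def VSem {E : Type} (S : EffSig E) (Γ : List (VTy E)) (V : Val) (A : VTy E) : Prop :=
  ∀ (ρ : List CloVal), EnvOk S Γ ρ → VRel S A ρ V

/-- Semantic typing of computations: `Γ ⊨ M :^φ B`. -/
def CSem {E : Type} (S : EffSig E) (Γ : List (VTy E)) (M : Comp) (φ : E) (B : CTy E) : Prop :=
  ∀ (ρ : List CloVal), EnvOk S Γ ρ → MRel S B ρ M φ

/-!
Every typing rule is sound for semantic typing, so the theorem follows by induction on derivations.
An introduction form evaluates to itself with effect `⊥`. An elimination form evaluates its
principal computation with some effect `a` and then continues with a computation already in the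
relation: if the principal computation has residual effect `b`, so that `a · b ≤ φ`, and the
continuation evaluates with effect `c` and residual effect `d`, so that `c · d ≤ b`, then
`(a · c) · d = a · (c · d) ≤ a · b ≤ φ`. At a returner type the residual effect is above `⊥` and
can be dropped, so that the bound on the effect of `x ← M in N` composes.
-/

section Soundness

variable {E : Type} {S : EffSig E}

theorem _root_.EffSig.op_le_op_left {b c : E} (a : E) (h : S.le b c) :
    S.le (S.op a b) (S.op a c) :=
  S.le_op a a b c (S.le_refl a) h

theorem _root_.EffSig.op_le_op_right {a b : E} (h : S.le a b) (c : E) :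
    S.le (S.op a c) (S.op b c) :=
  S.le_op a b c c h (S.le_refl c)

theorem _root_.EffSig.le_op_of_bot_le {b : E} (a : E) (h : S.le S.bot b) : S.le a (S.op a b) := by
  simpa only [S.op_bot] using EffSig.op_le_op_left a h

theorem wRel_unit : WRel S .unit .unit := by
  rw [WRel]

theorem wRel_thunk_iff {φ : E} {B : CTy E} {W : CloVal} :
    WRel S (.thunk φ B) W ↔ ∃ ρ M, W = .clo ρ M ∧ MRel S B ρ M φ := by
  rw [WRel]
  rfl

theorem wRel_prod_iff {A₁ A₂ : VTy E} {W : CloVal} :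
    WRel S (.prod A₁ A₂) W ↔ ∃ W₁ W₂, W = .pair W₁ W₂ ∧ WRel S A₁ W₁ ∧ WRel S A₂ W₂ := by
  rw [WRel]

theorem tRel_F_iff {A : VTy E} {T : Terminal} {φ : E} :
    TRel S (.F A) T φ ↔ ∃ W, T = .ret W ∧ WRel S A W ∧ S.le S.bot φ := by
  rw [TRel]

theorem tRel_arr_iff {A : VTy E} {B : CTy E} {T : Terminal} {φ : E} :
    TRel S (.arr A B) T φ ↔
      ∃ ρ M, T = .lamClo ρ M ∧ ∀ W, WRel S A W → MRel S B (W :: ρ) M φ := by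
  rw [TRel]
  rfl

theorem tRel_wth_iff {B₁ B₂ : CTy E} {T : Terminal} {φ : E} :
    TRel S (.wth B₁ B₂) T φ ↔
      ∃ ρ M₁ M₂, T = .cpairClo ρ M₁ M₂ ∧ MRel S B₁ ρ M₁ φ ∧ MRel S B₂ ρ M₂ φ := by
  rw [TRel]
  rfl

theorem mRel_F_iff {A : VTy E} {ρ : List CloVal} {M : Comp} {φ : E} :
    MRel S (.F A) ρ M φ ↔ ∃ W ψ, EvalComp S ρ M (.ret W) ψ ∧ WRel S A W ∧ S.le ψ φ := by
  constructor
  · rintro ⟨T, a, b, eval, rel, le⟩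
    obtain ⟨W, rfl, hW, bot_le⟩ := tRel_F_iff.1 rel
    exact ⟨W, a, eval, hW, S.le_trans _ _ _ (EffSig.le_op_of_bot_le a bot_le) le⟩
  · rintro ⟨W, ψ, eval, hW, le⟩
    exact ⟨.ret W, ψ, S.bot, eval, tRel_F_iff.2 ⟨W, rfl, hW, S.le_refl _⟩, by rwa [S.op_bot]⟩

theorem MRel.of_evalComp_bot {B : CTy E} {ρ : List CloVal} {M : Comp} {T : Terminal} {φ : E}
    (eval : EvalComp S ρ M T S.bot) (rel : TRel S B T φ) : MRel S B ρ M φ :=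
  ⟨T, S.bot, φ, eval, rel, by rw [S.bot_op]; exact S.le_refl φ⟩

theorem MRel.mono {B : CTy E} {ρ : List CloVal} {M : Comp} {φ ψ : E}
    (h : MRel S B ρ M φ) (le : S.le φ ψ) : MRel S B ρ M ψ := by
  obtain ⟨T, a, b, eval, rel, le'⟩ := h
  exact ⟨T, a, b, eval, rel, S.le_trans _ _ _ le' le⟩

theorem MRel.of_evalComp_imp {B : CTy E} {ρ ρ' : List CloVal} {M N : Comp} {φ : E}
    (hN : MRel S B ρ' N φ) (eval : ∀ {T ψ}, EvalComp S ρ' N T ψ → EvalComp S ρ M T ψ) :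
    MRel S B ρ M φ := by
  obtain ⟨T, a, b, evalN, rel, le⟩ := hN
  exact ⟨T, a, b, eval evalN, rel, le⟩

theorem MRel.of_evalComp_imp_op {B : CTy E} {ρ ρ' : List CloVal} {M N : Comp} {a b φ : E}
    (hN : MRel S B ρ' N b) (eval : ∀ {T ψ}, EvalComp S ρ' N T ψ → EvalComp S ρ M T (S.op a ψ))
    (le : S.le (S.op a b) φ) : MRel S B ρ M φ := by
  obtain ⟨T, c, d, evalN, rel, cd_le⟩ := hN
  refine ⟨T, S.op a c, d, eval evalN, rel, ?_⟩
  rw [S.op_assoc]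
  exact S.le_trans _ _ _ (EffSig.op_le_op_left a cd_le) le

theorem EnvOk.cons {Γ : List (VTy E)} {ρ : List CloVal} {A : VTy E} {W : CloVal}
    (hW : WRel S A W) (hρ : EnvOk S Γ ρ) : EnvOk S (A :: Γ) (W :: ρ)
  | 0, _, hx => ⟨W, rfl, Option.some.inj hx ▸ hW⟩
  | x + 1, A', hx => hρ x A' hx

variable {Γ : List (VTy E)} {V V₁ V₂ : Val} {M M₁ M₂ N : Comp} {A A₁ A₂ : VTy E}
  {B B₁ B₂ : CTy E} {φ φ₁ φ₂ : E}

theorem VSem.var {x : ℕ} (hx : Γ[x]? = some A) : VSem S Γ (.var x) A := fun _ hρ =>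
  let ⟨W, hW, rel⟩ := hρ x A hx
  ⟨W, .var hW, rel⟩

theorem VSem.unit : VSem S Γ .unit .unit := fun _ _ => ⟨.unit, .unit, wRel_unit⟩

theorem VSem.thunk (hM : CSem S Γ M φ B) : VSem S Γ (.thunk M) (.thunk φ B) := fun ρ hρ =>
  ⟨.clo ρ M, .thunk, wRel_thunk_iff.2 ⟨ρ, M, rfl, hM ρ hρ⟩⟩

theorem VSem.pair (h₁ : VSem S Γ V₁ A₁) (h₂ : VSem S Γ V₂ A₂) :
    VSem S Γ (.pair V₁ V₂) (.prod A₁ A₂) := fun ρ hρ =>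
  let ⟨W₁, eval₁, rel₁⟩ := h₁ ρ hρ
  let ⟨W₂, eval₂, rel₂⟩ := h₂ ρ hρ
  ⟨.pair W₁ W₂, .pair eval₁ eval₂, wRel_prod_iff.2 ⟨W₁, W₂, rfl, rel₁, rel₂⟩⟩

theorem CSem.tick (le : S.le S.tock φ) : CSem S Γ .tick φ (.F .unit) := fun _ _ =>
  mRel_F_iff.2 ⟨.unit, S.tock, .tick, wRel_unit, le⟩

theorem CSem.ret (hV : VSem S Γ V A) (le : S.le S.bot φ) : CSem S Γ (.ret V) φ (.F A) :=
  fun ρ hρ =>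
    let ⟨W, eval, rel⟩ := hV ρ hρ
    mRel_F_iff.2 ⟨W, S.bot, .ret eval, rel, le⟩

theorem CSem.letin (hM : CSem S Γ M φ₁ (.F A)) (hN : CSem S (A :: Γ) N φ₂ B)
    (le : S.le (S.op φ₁ φ₂) φ) : CSem S Γ (.letin M N) φ B := by
  intro ρ hρ
  obtain ⟨W, ψ, evalM, hW, ψ_le⟩ := mRel_F_iff.1 (hM ρ hρ)
  exact (hN (W :: ρ) (.cons hW hρ)).of_evalComp_imp_op (.letin evalM)
    (S.le_trans _ _ _ (EffSig.op_le_op_right ψ_le φ₂) le)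

theorem CSem.lam (hM : CSem S (A :: Γ) M φ B) : CSem S Γ (.lam M) φ (.arr A B) := fun ρ hρ =>
  .of_evalComp_bot .lam (tRel_arr_iff.2 ⟨ρ, M, rfl, fun W hW => hM (W :: ρ) (.cons hW hρ)⟩)

theorem CSem.app (hM : CSem S Γ M φ (.arr A B)) (hV : VSem S Γ V A) :
    CSem S Γ (.app M V) φ B := by
  intro ρ hρ
  obtain ⟨T, a, b, evalM, rel, le⟩ := hM ρ hρ
  obtain ⟨ρ', M', rfl, body⟩ := tRel_arr_iff.1 rel
  obtain ⟨W, evalV, hW⟩ := hV ρ hρ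
  exact (body W hW).of_evalComp_imp_op (.app evalM evalV) le

theorem CSem.force (hV : VSem S Γ V (.thunk φ₁ B)) (le : S.le φ₁ φ) :
    CSem S Γ (.force V) φ B := by
  intro ρ hρ
  obtain ⟨W, evalV, hW⟩ := hV ρ hρ
  obtain ⟨ρ', M, rfl, hM⟩ := wRel_thunk_iff.1 hW
  exact (hM.of_evalComp_imp (.force evalV)).mono le

theorem CSem.split (hV : VSem S Γ V (.prod A₁ A₂)) (hN : CSem S (A₂ :: A₁ :: Γ) N φ B) :
    CSem S Γ (.split V N) φ B := by
  intro ρ hρ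
  obtain ⟨W, evalV, hW⟩ := hV ρ hρ
  obtain ⟨W₁, W₂, rfl, hW₁, hW₂⟩ := wRel_prod_iff.1 hW
  exact (hN (W₂ :: W₁ :: ρ) (.cons hW₂ (.cons hW₁ hρ))).of_evalComp_imp (.split evalV)

theorem CSem.cpair (h₁ : CSem S Γ M₁ φ B₁) (h₂ : CSem S Γ M₂ φ B₂) :
    CSem S Γ (.cpair M₁ M₂) φ (.wth B₁ B₂) := fun ρ hρ =>
  .of_evalComp_bot .cpair (tRel_wth_iff.2 ⟨ρ, M₁, M₂, rfl, h₁ ρ hρ, h₂ ρ hρ⟩)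

theorem CSem.fst (hM : CSem S Γ M φ (.wth B₁ B₂)) : CSem S Γ (.fst M) φ B₁ := by
  intro ρ hρ
  obtain ⟨T, a, b, evalM, rel, le⟩ := hM ρ hρ
  obtain ⟨ρ', M₁, M₂, rfl, h₁, -⟩ := tRel_wth_iff.1 rel
  exact h₁.of_evalComp_imp_op (.fst evalM) le

theorem CSem.snd (hM : CSem S Γ M φ (.wth B₁ B₂)) : CSem S Γ (.snd M) φ B₂ := by
  intro ρ hρ
  obtain ⟨T, a, b, evalM, rel, le⟩ := hM ρ hρ
  obtain ⟨ρ', M₁, M₂, rfl, -, h₂⟩ := tRel_wth_iff.1 rel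
  exact h₂.of_evalComp_imp_op (.snd evalM) le

mutual

theorem VHasTy.vSem {Γ : List (VTy E)} {V : Val} {A : VTy E} : VHasTy S Γ V A → VSem S Γ V A
  | .var hx => .var hx
  | .unit => .unit
  | .thunk hM => .thunk hM.cSem
  | .pair h₁ h₂ => .pair h₁.vSem h₂.vSem

theorem CHasTy.cSem {Γ : List (VTy E)} {M : Comp} {φ : E} {B : CTy E} :
    CHasTy S Γ M φ B → CSem S Γ M φ B
  | .tick le => .tick le
  | .lam hM => .lam hM.cSem
  | .app hM hV => .app hM.cSem hV.vSem
  | .force hV le => .force hV.vSem le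
  | .ret hV le => .ret hV.vSem le
  | .letin hM hN le => .letin hM.cSem hN.cSem le
  | .split hV hN => .split hV.vSem hN.cSem
  | .cpair h₁ h₂ => .cpair h₁.cSem h₂.cSem
  | .fst hM => .fst hM.cSem
  | .snd hM => .snd hM.cSem

end

end Soundness

/-- Fundamental lemma of the effect logical relation: syntactic typing implies
semantic typing, for values and for computations. -/
theorem fundamental_lemma {E : Type} (S : EffSig E) :
    (∀ {Γ : List (VTy E)} {V : Val} {A : VTy E}, VHasTy S Γ V A → VSem S Γ V A) ∧
    (∀ {Γ : List (VTy E)} {M : Comp} {φ : E} {B : CTy E}, CHasTy S Γ M φ B → CSem S Γ M φ B) := by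
  exact ⟨VHasTy.vSem, CHasTy.cSem⟩

end CBPVEff
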